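/- (Lower bound of mixing time of LMC, Theorem 5) Let f(x) = (m/2)·Σ_{i=1}^d x_i² + (L/2)·Σ_{i=d+1}^{2d} x_i² on ℝ^{2d} with m = 1 and L ≥ 4, and let μ be the probability measure on ℝ^{2d} with density proportional to exp(−f). Run LMC from x₀ = (1,1,…,1) ∈ ℝ^{2d} with any step size h satisfying 0 < h < 2/L. Then for every ε > 0, every k with k < (√d/(8ε))·log(√d/ε) satisfies W₂(Law(x̄_k), μ) > ε; i.e., the ε-mixing time of LMC in W₂ is at least (√d/(8ε))·log(√d/ε). -/

import Mathlib

open MeasureTheory ProbabilityTheory Real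
open scoped ENNReal NNReal

noncomputable section

/-- `ℝ^d` with the Euclidean structure. -/
abbrev Euc (d : ℕ) := EuclideanSpace ℝ (Fin d)

/-- The standard Gaussian measure `N(0, I_d)` on `ℝ^d`. -/
noncomputable def stdGaussian (d : ℕ) : Measure (Euc d) :=
  (Measure.pi fun _ : Fin d => gaussianReal 0 1).map (EuclideanSpace.equiv (Fin d) ℝ).symm

/-- The centered Gaussian measure on `ℝ^d` with covariance `σ2 • I_d`. -/
noncomputable def isoGaussian (d : ℕ) (σ2 : ℝ) : Measure (Euc d) :=
  (stdGaussian d).map fun x => Real.sqrt σ2 • x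

/-- `B` is a standard `d`-dimensional Brownian motion with respect to the filtration `ℱ`
under the probability measure `P`. -/
structure IsStdBrownian {d : ℕ} {Ω : Type*} {mΩ : MeasurableSpace Ω} (P : Measure Ω)
    (ℱ : Filtration ℝ mΩ) (B : ℝ → Ω → Euc d) : Prop where
  init : ∀ ω, B 0 ω = 0
  cont : ∀ ω, Continuous fun t => B t ω
  adapted : StronglyAdapted ℱ B
  incr_law : ∀ s t : ℝ, 0 ≤ s → s ≤ t →
    P.map (fun ω => B t ω - B s ω) = isoGaussian d (t - s)
  incr_indep : ∀ s t : ℝ, 0 ≤ s → s ≤ t →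
    Indep (MeasurableSpace.comap (fun ω => B t ω - B s ω) inferInstance) (ℱ s) P

/-- `X` is a (pathwise) solution of the overdamped Langevin dynamics
`dX_t = -∇f(X_t) dt + √2 dB_t`: a continuous adapted process satisfying the integral
equation `X_t = X_0 - ∫₀ᵗ ∇f(X_s) ds + √2 B_t` for all `t ≥ 0`. -/
structure IsLangevinSolution {d : ℕ} {Ω : Type*} {mΩ : MeasurableSpace Ω}
    (ℱ : Filtration ℝ mΩ) (f : Euc d → ℝ) (B : ℝ → Ω → Euc d) (X : ℝ → Ω → Euc d) : Prop where
  cont : ∀ ω, Continuous fun t => X t ω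
  adapted : StronglyAdapted ℱ X
  eqn : ∀ ω, ∀ t : ℝ, 0 ≤ t →
    X t ω = X 0 ω - (∫ s in (0:ℝ)..t, gradient f (X s ω)) + Real.sqrt 2 • B t ω

/-- The Hessian bounds `m • I ≼ ∇²f(x) ≼ L • I` for all `x`, expressed through the second
iterated Fréchet derivative: `m ‖v‖² ≤ ⟨v, ∇²f(x) v⟩ ≤ L ‖v‖²`. -/
def HessianBounds {d : ℕ} (m L : ℝ) (f : Euc d → ℝ) : Prop :=
  ∀ x v : Euc d, m * ‖v‖ ^ 2 ≤ iteratedFDeriv ℝ 2 f x ![v, v] ∧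
    iteratedFDeriv ℝ 2 f x ![v, v] ≤ L * ‖v‖ ^ 2


/-- The 2-Wasserstein distance:
`W₂(μ, ν) = inf over couplings γ of (∫ ‖x - y‖² dγ)^{1/2}`, where a coupling of `μ` and `ν`
is a probability measure on the product space whose marginals are `μ` and `ν`. -/
noncomputable def W2 {α : Type*} [MeasurableSpace α] [NormedAddCommGroup α]
    (μ ν : Measure α) : ℝ :=
  Real.sqrt (ENNReal.toReal
    (⨅ γ ∈ {γ : Measure (α × α) |
        IsProbabilityMeasure γ ∧ γ.map Prod.fst = μ ∧ γ.map Prod.snd = ν},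
      ∫⁻ p, (‖p.1 - p.2‖₊ : ℝ≥0∞) ^ 2 ∂γ))

/-- `μ` is the probability measure with density proportional to `exp (-f)` with respect to
Lebesgue measure. -/
def IsGibbs {d : ℕ} (f : Euc d → ℝ) (μ : Measure (Euc d)) : Prop :=
  IsProbabilityMeasure μ ∧ ∃ c : ℝ≥0∞, c ≠ 0 ∧ c ≠ ⊤ ∧
    μ = c • (volume : Measure (Euc d)).withDensity fun x => ENNReal.ofReal (Real.exp (-f x))


/-- The quadratic potential `f(x) = (m/2) Σ_{i<d} x_i² + (L/2) Σ_{d ≤ i < 2d} x_i²` on `ℝ^{2d}`. -/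
noncomputable def fquad (d : ℕ) (m L : ℝ) : Euc (2 * d) → ℝ :=
  fun x => ∑ i : Fin (2 * d), ((if (i : ℕ) < d then m else L) / 2) * x i ^ 2


lemma aux_pi_withDensity {n : ℕ} (v : Fin n → ℝ≥0) (hv : ∀ i, v i ≠ 0) :
    Measure.pi (fun i => gaussianReal 0 (v i)) =
      (volume : Measure (Fin n → ℝ)).withDensity
        (fun x => ENNReal.ofReal (∏ i, gaussianPDFReal 0 (v i) (x i))) := by
  refine Measure.pi_eq fun s hs => ?_
  rw [withDensity_apply _ (MeasurableSet.univ_pi hs), volume_pi, Measure.restrict_pi_pi,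
    ← ofReal_integral_eq_lintegral_ofReal, integral_fintype_prod_eq_prod (𝕜 := ℝ),
    ENNReal.ofReal_prod_of_nonneg]
  · refine Finset.prod_congr rfl fun i _ => ?_
    rw [gaussianReal_apply_eq_integral _ (hv i)]
  · intro i _
    exact integral_nonneg fun x => gaussianPDFReal_nonneg _ _ _
  · exact Integrable.fintype_prod (𝕜 := ℝ) fun i => (integrable_gaussianPDFReal 0 (v i)).restrict
  · exact Filter.Eventually.of_forall fun x =>
      Finset.prod_nonneg fun i _ => gaussianPDFReal_nonneg _ _ _

lemma aux_gibbs {n : ℕ} (a : Fin n → ℝ≥0) (ha : ∀ i, a i ≠ 0) {μ : Measure (Euc n)}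
    (hμ : IsGibbs (fun x : Euc n => ∑ i, ((a i : ℝ) / 2) * x i ^ 2) μ) :
    μ = (Measure.pi (fun i => gaussianReal 0 (a i)⁻¹)).map (WithLp.toLp 2) := by
  obtain ⟨hP, c, hc0, hct, rfl⟩ := hμ
  set M := (volume : Measure (Euc n)).withDensity fun x =>
    ENNReal.ofReal (Real.exp (-(∑ i, ((a i : ℝ) / 2) * x i ^ 2))) with hM
  have key : (Measure.pi (fun i => gaussianReal 0 (a i)⁻¹)).map (WithLp.toLp 2) =
      (ENNReal.ofReal (∏ i, (√(2 * π * ((a i)⁻¹ : ℝ≥0)))⁻¹)) • M := by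
    rw [aux_pi_withDensity _ (fun i => inv_ne_zero (ha i)), hM, ← withDensity_smul _ (by fun_prop)]
    rw [← (PiLp.volume_preserving_toLp (Fin n)).map_eq]
    ext s hs
    have hm : Measurable (WithLp.toLp 2 : (Fin n → ℝ) → Euc n) :=
      (PiLp.volume_preserving_toLp (Fin n)).measurable
    rw [Measure.map_apply hm hs, withDensity_apply _ hs, withDensity_apply _ (hm hs),
      setLIntegral_map hs (by fun_prop) hm]
    refine lintegral_congr fun x => ?_
    simp only [Pi.smul_apply, smul_eq_mul]
    rw [← ENNReal.ofReal_mul (Finset.prod_nonneg fun i _ => by positivity), ← Finset.sum_neg_distrib,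
      Real.exp_sum, ← Finset.prod_mul_distrib]
    congr 1
    refine Finset.prod_congr rfl fun i _ => ?_
    rw [gaussianPDFReal_def]
    have : (a i : ℝ) ≠ 0 := by exact_mod_cast ha i
    simp only [NNReal.coe_inv]
    congr 2
    field_simp
    ring
  have h1 : c * M Set.univ = 1 := by
    have := hP.measure_univ
    rwa [Measure.smul_apply, smul_eq_mul] at this
  have hm : Measurable (WithLp.toLp 2 : (Fin n → ℝ) → Euc n) :=
      (PiLp.volume_preserving_toLp (Fin n)).measurable
  have : IsProbabilityMeasure ((Measure.pi (fun i => gaussianReal 0 (a i)⁻¹)).map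
      (WithLp.toLp 2 : (Fin n → ℝ) → Euc n)) := Measure.isProbabilityMeasure_map hm.aemeasurable
  have h2 : (ENNReal.ofReal (∏ i, (√(2 * π * ((a i)⁻¹ : ℝ≥0)))⁻¹)) * M Set.univ = 1 := by
    have := measure_univ (μ := (Measure.pi (fun i => gaussianReal 0 (a i)⁻¹)).map
      (WithLp.toLp 2 : (Fin n → ℝ) → Euc n))
    rwa [key, Measure.smul_apply, smul_eq_mul] at this
  rw [key]
  congr 1
  rw [ENNReal.eq_inv_of_mul_eq_one_left h1, ENNReal.eq_inv_of_mul_eq_one_left h2]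

lemma aux_marg {n : ℕ} (v : Fin n → ℝ≥0) (i : Fin n) :
    ((Measure.pi (fun i => gaussianReal 0 (v i))).map
      (WithLp.toLp 2 : (Fin n → ℝ) → Euc n)).map (fun x => x i) = gaussianReal 0 (v i) := by
  have hm : Measurable (WithLp.toLp 2 : (Fin n → ℝ) → Euc n) :=
      (PiLp.volume_preserving_toLp (Fin n)).measurable
  rw [Measure.map_map (by fun_prop) hm]
  exact (measurePreserving_eval (fun i => gaussianReal 0 (v i)) i).map_eq

/-- moments from a marginal -/
lemma aux_moments {Ω : Type*} {mΩ : MeasurableSpace Ω} {P : Measure Ω} {v : ℝ≥0} {X : Ω → ℝ}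
    (hX : Measurable X) (h : P.map X = gaussianReal 0 v) :
    MemLp X 2 P ∧ ∫ ω, X ω ∂P = 0 ∧ ∫ ω, X ω ^ 2 ∂P = v := by
  refine ⟨?_, ?_, ?_⟩
  · have := memLp_id_gaussianReal (μ := 0) (v := v) 2
    rw [← h] at this
    exact (memLp_map_measure_iff (by fun_prop) hX.aemeasurable).1 this
  · have := integral_id_gaussianReal (μ := 0) (v := v)
    rw [← h, integral_map hX.aemeasurable (by fun_prop)] at this
    exact this
  · have := variance_id_gaussianReal (μ := 0) (v := v)
    rw [variance_of_integral_eq_zero (by fun_prop) (by simp), ← h,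
      integral_map hX.aemeasurable (by fun_prop)] at this
    simpa using this

lemma aux_gradient {n : ℕ} (a : Fin n → ℝ) (x : Euc n) :
    gradient (fun x : Euc n => ∑ i, (a i / 2) * x i ^ 2) x = WithLp.toLp 2 (fun i => a i * x i) := by
  apply HasGradientAt.gradient
  rw [hasGradientAt_iff_hasFDerivAt]
  have h : ∀ i : Fin n, HasFDerivAt (fun x : Euc n => (a i / 2) * x i ^ 2)
      ((a i / 2) • ((2 * x i) • (EuclideanSpace.proj i : Euc n →L[ℝ] ℝ))) x := by
    intro i
    have h0 : HasFDerivAt (fun x : Euc n => x i) (EuclideanSpace.proj i : Euc n →L[ℝ] ℝ) x :=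
      (EuclideanSpace.proj i : Euc n →L[ℝ] ℝ).hasFDerivAt
    have := (h0.pow 2).const_mul (a i / 2)
    simpa using this
  have h2 := HasFDerivAt.fun_sum (u := Finset.univ) (fun i _ => h i)
  have e : InnerProductSpace.toDual ℝ (Euc n) (WithLp.toLp 2 (fun i => a i * x i)) =
      ∑ i, ((a i / 2) • ((2 * x i) • (EuclideanSpace.proj i : Euc n →L[ℝ] ℝ))) := by
    refine ContinuousLinearMap.ext fun y => ?_
    rw [InnerProductSpace.toDual_apply_apply, PiLp.inner_apply, sum_apply]
    refine Finset.sum_congr rfl fun i _ => ?_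
    simp
    ring
  rw [e]
  exact h2

lemma aux_expand {Ω : Type*} {mΩ : MeasurableSpace Ω} {P : Measure Ω} {U V : Ω → ℝ}
    (hU : MemLp U 2 P) (hV : MemLp V 2 P) (s t : ℝ) :
    ∫ ω, (s * U ω + t * V ω) ^ 2 ∂P =
      s ^ 2 * ∫ ω, U ω ^ 2 ∂P + 2 * s * t * ∫ ω, U ω * V ω ∂P + t ^ 2 * ∫ ω, V ω ^ 2 ∂P := by
  have h1 := hU.integrable_sq
  have h2 := hV.integrable_sq
  have h3 : Integrable (fun ω => U ω * V ω) P := hU.integrable_mul hV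
  have : ∀ ω, (s * U ω + t * V ω) ^ 2 =
      s ^ 2 * U ω ^ 2 + 2 * s * t * (U ω * V ω) + t ^ 2 * V ω ^ 2 := fun ω => by ring
  simp_rw [this]
  rw [integral_add ((h1.const_mul _).fun_add (h3.const_mul _)) (h2.const_mul _),
    integral_add (h1.const_mul _) (h3.const_mul _), integral_const_mul, integral_const_mul,
    integral_const_mul]

lemma aux_mean {Ω : Type*} {mΩ : MeasurableSpace Ω} {P : Measure Ω} [IsProbabilityMeasure P]
    {U V : Ω → ℝ} (hU : MemLp U 2 P) (hV : MemLp V 2 P) (hV0 : ∫ ω, V ω ∂P = 0) :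
    (∫ ω, U ω ∂P) ^ 2 ≤ ∫ ω, (U ω - V ω) ^ 2 ∂P := by
  have h := variance_nonneg (U - V) P
  rw [variance_eq_sub (hU.sub hV)] at h
  have h2 : ∫ ω, (U - V) ω ∂P = ∫ ω, U ω ∂P := by
    simp only [Pi.sub_apply]
    rw [integral_sub (hU.integrable (by norm_num)) (hV.integrable (by norm_num)), hV0, sub_zero]
  rw [h2] at h
  simpa using h

lemma aux_second {Ω : Type*} {mΩ : MeasurableSpace Ω} {P : Measure Ω}
    {U V : Ω → ℝ} (hU : MemLp U 2 P) (hV : MemLp V 2 P) (hV1 : ∫ ω, V ω ^ 2 ∂P = 1)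
    {s : ℝ} (hs : 0 < s) (hU1 : ∫ ω, U ω ^ 2 ∂P = s ^ 2) :
    (s - 1) ^ 2 ≤ ∫ ω, (U ω - V ω) ^ 2 ∂P := by
  have h1 := aux_expand hU hV 1 (-1)
  have h2 := aux_expand hU hV 1 (-s)
  have h3 : 0 ≤ ∫ ω, (1 * U ω + -s * V ω) ^ 2 ∂P := integral_nonneg fun ω => sq_nonneg _
  rw [h2, hU1, hV1] at h3
  have h4 : ∫ ω, (U ω - V ω) ^ 2 ∂P = ∫ ω, (1 * U ω + -1 * V ω) ^ 2 ∂P := by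
    congr 1; ext ω; ring
  rw [h4, h1, hU1, hV1]
  have : ∫ ω, U ω * V ω ∂P ≤ s := by
    by_contra hc
    push Not at hc
    nlinarith
  nlinarith

lemma aux_memLp {n : ℕ} {Ω : Type*} {mΩ : MeasurableSpace Ω} {P : Measure Ω} {X : Ω → Euc n}
    (h : ∀ i, MemLp (fun ω => X ω i) 2 P) : MemLp X 2 P := 
  MemLp.of_eval_piLp h

lemma aux_W2 {n : ℕ} {μ ν : Measure (Euc n)} [IsProbabilityMeasure μ] [IsProbabilityMeasure ν]
    (hμ : ∀ i, MemLp (fun x : Euc n => x i) 2 μ) (hν : ∀ i, MemLp (fun x : Euc n => x i) 2 ν)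
    (S : Finset (Fin n)) (D : ℝ)
    (H : ∀ i ∈ S, ∀ γ : Measure (Euc n × Euc n), IsProbabilityMeasure γ → 
      MemLp (fun p : Euc n × Euc n => p.1 i) 2 γ → MemLp (fun p : Euc n × Euc n => p.2 i) 2 γ → 
      γ.map Prod.fst = μ → γ.map Prod.snd = ν → D ≤ ∫ p, (p.1 i - p.2 i) ^ 2 ∂γ) :
    √(S.card * D) ≤ W2 μ ν := by
  unfold W2
  apply Real.sqrt_le_sqrt
  have hfin : ∫⁻ p, (‖p.1 - p.2‖₊ : ℝ≥0∞) ^ 2 ∂(μ.prod ν) ≠ ⊤ := by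
    have h1 : MemLp (fun p : Euc n × Euc n => p.1) 2 (μ.prod ν) :=
      (aux_memLp (X := id) hμ).comp_fst ν
    have h2 : MemLp (fun p : Euc n × Euc n => p.2) 2 (μ.prod ν) :=
      (aux_memLp (X := id) hν).comp_snd μ
    have h3 := (h1.sub h2).2
    have h4 := lintegral_rpow_enorm_lt_top_of_eLpNorm_lt_top (by norm_num) (by norm_num) h3
    have h5 := h4.ne
    simpa [enorm_eq_nnnorm] using h5
  refine (ENNReal.ofReal_le_iff_le_toReal ?_).1 ?_
  · refine ne_top_of_le_ne_top hfin (iInf₂_le (μ.prod ν) ⟨inferInstance, ?_, ?_⟩)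
    · simp
    · simp
  · refine le_iInf₂ fun γ hγ => ?_
    obtain ⟨hP, h1, h2⟩ := hγ
    have m1 : ∀ i, MemLp (fun p : Euc n × Euc n => p.1 i) 2 γ := fun i => by
      have := hμ i
      rw [← h1] at this
      exact (memLp_map_measure_iff (by fun_prop) (by fun_prop)).1 this
    have m2 : ∀ i, MemLp (fun p : Euc n × Euc n => p.2 i) 2 γ := fun i => by
      have := hν i
      rw [← h2] at this
      exact (memLp_map_measure_iff (by fun_prop) (by fun_prop)).1 this
    have hint : ∀ i, Integrable (fun p : Euc n × Euc n => (p.1 i - p.2 i) ^ 2) γ := fun i =>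
      ((m1 i).sub (m2 i)).integrable_sq
    calc ENNReal.ofReal (S.card * D) ≤ ENNReal.ofReal (∫ p, ∑ i ∈ S, (p.1 i - p.2 i) ^ 2 ∂γ) := by
          apply ENNReal.ofReal_le_ofReal
          rw [integral_finsetSum _ (fun i _ => hint i), ← nsmul_eq_mul]
          exact Finset.card_nsmul_le_sum _ _ _ fun i hi => H i hi γ hP (m1 i) (m2 i) h1 h2
      _ = ∫⁻ p, ENNReal.ofReal (∑ i ∈ S, (p.1 i - p.2 i) ^ 2) ∂γ := by
          apply ofReal_integral_eq_lintegral_ofReal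
          · exact integrable_finsetSum _ fun i _ => hint i
          · exact Filter.Eventually.of_forall fun p => Finset.sum_nonneg fun i _ => sq_nonneg _
      _ ≤ _ := by
          refine lintegral_mono fun p => ?_
          have : (‖p.1 - p.2‖₊ : ℝ≥0∞) ^ 2 = ENNReal.ofReal (‖p.1 - p.2‖ ^ 2) := by
            rw [ENNReal.ofReal_pow (norm_nonneg _), ofReal_norm, enorm_eq_nnnorm]
          rw [this]
          apply ENNReal.ofReal_le_ofReal
          rw [EuclideanSpace.real_norm_sq_eq]
          exact Finset.sum_le_sum_of_subset_of_nonneg (Finset.subset_univ _) 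
            fun i _ _ => sq_nonneg _

/-- Numerical core. -/
lemma aux_num {h r : ℝ} (hh0 : 0 < h) (hh1 : h < 1 / 2) (hr : 0 < r) (k : ℕ)
    (hk : (k : ℝ) < 1 / (8 * r) * Real.log (1 / r)) (ha : (1 - h) ^ k ≤ r) :
    (1 + r) ^ 2 < 1 / (1 - h / 2) - ((1 - h) ^ k) ^ 2 * (1 / (1 - h / 2) - 1) := by
  have h4 : 4 * r < h := by
    by_contra hc
    push Not at hc
    have e1 : Real.exp (-(2 * h)) ≤ 1 - h := by
      rw [← Real.le_log_iff_exp_le (by linarith)]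
      refine le_trans ?_ (Real.one_sub_inv_le_log_of_pos (by linarith))
      have h1 : 0 < 1 - h := by linarith
      rw [show 1 - (1 - h)⁻¹ = - h / (1 - h) by field_simp; ring, le_div_iff₀ h1]
      nlinarith
    have e2 : Real.exp (-(2 * h) * k) ≤ (1 - h) ^ k := by
      rw [mul_comm, Real.exp_nat_mul]
      exact pow_le_pow_left₀ (Real.exp_pos _).le e1 k
    have e3 : r < Real.exp (-(2 * h) * k) := by
      rw [← Real.log_lt_iff_lt_exp hr]
      rw [one_div r, Real.log_inv, div_mul_eq_mul_div, lt_div_iff₀ (by positivity)] at hk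
      have : h * k ≤ 4 * r * k := by gcongr
      nlinarith
    linarith
  have hp : 0 ≤ (1 - h) ^ k := pow_nonneg (by linarith) _
  have hp2 : ((1 - h) ^ k) ^ 2 ≤ r ^ 2 := pow_le_pow_left₀ hp ha 2
  have hpos : 0 < 1 - h / 2 := by linarith
  set p := ((1 - h) ^ k) ^ 2
  have e : 1 / (1 - h / 2) - p * (1 / (1 - h / 2) - 1) = (1 - p * (h / 2)) / (1 - h / 2) := by
    have : 1 - h / 2 ≠ 0 := hpos.ne'
    rw [eq_div_iff this]
    have h1 : 1 / (1 - h / 2) * (1 - h / 2) = 1 := by rw [one_div, inv_mul_cancel₀ this]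
    linear_combination (1 - p) * h1
  rw [e, lt_div_iff₀ hpos]
  have s1 : (1 + r) ^ 2 * (1 - h / 2) ≤ (1 + r) ^ 2 * (1 - 2 * r) := by
    gcongr; linarith
  have s2 : p * (h / 2) ≤ r ^ 2 * 1 := by
    gcongr; linarith
  nlinarith [pow_pos hr 3, pow_pos hr 2]

lemma aux_dyn {Ω : Type*} {mΩ : MeasurableSpace Ω} {P : Measure Ω} [IsProbabilityMeasure P]
    {X Z : ℕ → Ω → ℝ} {b c : ℝ} (h0 : ∀ ω, X 0 ω = 1)
    (hX : ∀ k ω, X (k + 1) ω = b * X k ω + c * Z (k + 1) ω)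
    (hZ : ∀ k, MemLp (Z k) 2 P) (hZ0 : ∀ k, ∫ ω, Z k ω ∂P = 0)
    (hZ1 : ∀ k, ∫ ω, Z k ω ^ 2 ∂P = 1)
    (hZZ : ∀ i j, i ≠ j → ∫ ω, Z i ω * Z j ω ∂P = 0) (k : ℕ) :
    MemLp (X k) 2 P ∧ ∫ ω, X k ω ∂P = b ^ k ∧ (∀ j, k < j → ∫ ω, X k ω * Z j ω ∂P = 0) ∧
      ∀ q : ℝ, q = b ^ 2 * q + c ^ 2 → ∫ ω, X k ω ^ 2 ∂P = q - (b ^ k) ^ 2 * (q - 1) := by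
  induction k with
  | zero =>
    have e : X 0 = fun _ => 1 := funext h0
    rw [e]
    refine ⟨memLp_const _, by simp, fun j _ => by simp [hZ0], fun q _ => by simp⟩
  | succ k ih =>
    obtain ⟨i1, i2, i3, i4⟩ := ih
    have e : X (k + 1) = fun ω => b * X k ω + c * Z (k + 1) ω := funext (hX k)
    rw [e]
    refine ⟨(i1.const_mul b).add ((hZ (k + 1)).const_mul c), ?_, fun j hj => ?_, fun q hq => ?_⟩
    · rw [integral_add ((i1.const_mul b).integrable (by norm_num))
        (((hZ (k + 1)).const_mul c).integrable (by norm_num)), integral_const_mul,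
        integral_const_mul, i2, hZ0]
      ring
    · have : ∀ ω, (b * X k ω + c * Z (k + 1) ω) * Z j ω =
        b * (X k ω * Z j ω) + c * (Z (k + 1) ω * Z j ω) := fun ω => by ring
      simp_rw [this]
      have a1 : Integrable (fun ω => X k ω * Z j ω) P := i1.integrable_mul (hZ j)
      have a2 : Integrable (fun ω => Z (k + 1) ω * Z j ω) P := (hZ _).integrable_mul (hZ j)
      rw [integral_add (a1.const_mul _) (a2.const_mul _), integral_const_mul,
        integral_const_mul, i3 j (by omega), hZZ _ _ (by omega)]
      ring
    · rw [aux_expand i1 (hZ (k + 1)), i3 _ (by omega), hZ1, i4 q hq]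
      linear_combination -hq

lemma aux_card (d : ℕ) : (Finset.univ.filter fun i : Fin (2 * d) => (i : ℕ) < d).card = d := by
  rw [Fin.card_filter_val_lt]
  omega

/-- **Lower bound of the mixing time of LMC** (Theorem 5).
For the quadratic potential `f(x) = (1/2) Σ_{i<d} x_i² + (L/2) Σ_{d≤i<2d} x_i²` with `L ≥ 4`,
the Gaussian target `μ ∝ exp (-f)`, any step size `0 < h < 2/L`, and initial point
`x₀ = (1, …, 1)`, every `ε > 0` and every `k < (√d/(8ε)) log (√d/ε)` satisfy
`W₂(Law(x̄_k), μ) > ε`. -/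
theorem lmc_mixing_time_lower_bound
    {d : ℕ} {Ω : Type*} {mΩ : MeasurableSpace Ω} {P : Measure Ω} [IsProbabilityMeasure P]
    {L : ℝ} (hL : 4 ≤ L)
    {μ : Measure (Euc (2 * d))} (hμ : IsGibbs (fquad d 1 L) μ)
    {h : ℝ} (hh0 : 0 < h) (hh1 : h < 2 / L)
    {ξ : ℕ → Ω → Euc (2 * d)} (hξmeas : ∀ k, Measurable (ξ k))
    (hξlaw : ∀ k, P.map (ξ k) = stdGaussian (2 * d))
    (hindep : iIndepFun ξ P)
    {Xb : ℕ → Ω → Euc (2 * d)} (hXb0 : Xb 0 = fun _ => WithLp.toLp 2 fun _ : Fin (2 * d) => (1 : ℝ))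
    (hXb : ∀ k : ℕ, Xb (k + 1) = fun ω =>
      Xb k ω - h • gradient (fquad d 1 L) (Xb k ω) + Real.sqrt (2 * h) • ξ (k + 1) ω)
    {ε : ℝ} (hε : 0 < ε) (k : ℕ)
    (hkmix : (k : ℝ) < Real.sqrt d / (8 * ε) * Real.log (Real.sqrt d / ε)) :
    ε < W2 (P.map (Xb k)) μ := by
  classical
  have hd : 0 < √(d : ℝ) := by
    rcases (Real.sqrt_nonneg (d : ℝ)).eq_or_lt with h0 | h0
    · rw [← h0] at hkmix
      have : (0 : ℝ) ≤ k := Nat.cast_nonneg k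
      simp at hkmix
      linarith
    · exact h0
  have hhalf : h < 1 / 2 := by
    refine hh1.trans_le ?_
    rw [div_le_div_iff₀ (by linarith) (by norm_num)]
    linarith
  have hμP : IsProbabilityMeasure μ := hμ.1
  -- the coefficients
  let a : Fin (2 * d) → ℝ≥0 := fun i => if (i : ℕ) < d then 1 else ⟨L, by linarith⟩
  have ha : ∀ i, (a i : ℝ) = if (i : ℕ) < d then 1 else L := by
    intro i
    by_cases hi : (i : ℕ) < d
    · simp [a, hi]
    · simp [a, hi]; rfl
  have ha0 : ∀ i, a i ≠ 0 := by
    intro i h0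
    have := ha i
    rw [h0] at this
    split_ifs at this
    · simp at this
    · simp at this
      linarith
  have hf : fquad d 1 L = fun x : Euc (2 * d) => ∑ i, ((a i : ℝ) / 2) * x i ^ 2 := by
    funext x
    simp only [fquad, ha]
  -- target moments
  have hμeq := aux_gibbs a ha0 (hf ▸ hμ)
  have hμmom : ∀ i, MemLp (fun x : Euc (2 * d) => x i) 2 μ ∧ ∫ x, x i ∂μ = 0 ∧
      ∫ x, x i ^ 2 ∂μ = ((a i)⁻¹ : ℝ≥0) := by
    intro i
    refine aux_moments (X := fun x : Euc (2 * d) => x i) (by fun_prop) ?_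
    rw [hμeq]
    exact aux_marg _ i
  -- noise moments
  have hZmeas : ∀ i k, Measurable (fun ω => ξ k ω i) := fun i k => by
    have := hξmeas k
    fun_prop
  have hZmom : ∀ i k, MemLp (fun ω => ξ k ω i) 2 P ∧ ∫ ω, ξ k ω i ∂P = 0 ∧
      ∫ ω, ξ k ω i ^ 2 ∂P = (1 : ℝ≥0) := by
    intro i k
    refine aux_moments (X := fun ω => ξ k ω i) (hZmeas i k) ?_
    have h1 : P.map (fun ω => ξ k ω i) = (P.map (ξ k)).map (fun x => x i) := by
      rw [Measure.map_map (by fun_prop) (hξmeas k)]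
      rfl
    rw [h1, hξlaw k]
    exact aux_marg (fun _ => 1) i
  have hZZ : ∀ i k l, k ≠ l → ∫ ω, ξ k ω i * ξ l ω i ∂P = 0 := by
    intro i k l hkl
    have h1 := (hindep.indepFun hkl).comp (φ := fun x : Euc (2 * d) => x i)
      (ψ := fun x : Euc (2 * d) => x i) (by fun_prop) (by fun_prop)
    have h2 := h1.integral_fun_mul_eq_mul_integral (hZmeas i k).aestronglyMeasurable
      (hZmeas i l).aestronglyMeasurable
    have h3 := (hZmom i k).2.1
    simp only [Function.comp_apply] at h2
    rw [h2, h3, zero_mul]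
  -- dynamics
  have hdyn : ∀ i j ω, Xb (j + 1) ω i =
      (1 - h * a i) * Xb j ω i + √(2 * h) * ξ (j + 1) ω i := by
    intro i j ω
    rw [hXb j, hf]
    beta_reduce
    rw [aux_gradient (fun i => (a i : ℝ))]
    simp
    ring
  have hXmom := fun i => aux_dyn (P := P) (X := fun k ω => Xb k ω i) (Z := fun k ω => ξ k ω i)
    (b := 1 - h * a i) (c := √(2 * h)) (fun ω => by rw [hXb0]) (hdyn i) (fun k => (hZmom i k).1)
    (fun k => (hZmom i k).2.1) (fun k => by simpa using (hZmom i k).2.2) (hZZ i) k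
  have hXmeas : Measurable (Xb k) := by
    have : ∀ j, ∀ i, Measurable (fun ω => Xb j ω i) := by
      intro j i
      induction j with
      | zero => rw [hXb0]; exact measurable_const
      | succ j ih =>
        rw [funext (hdyn i j)]
        exact (ih.const_mul _).add ((hZmeas i _).const_mul _)
    have h1 : Measurable (fun ω => (fun i => Xb k ω i)) := measurable_pi_iff.2 (this k)
    exact (PiLp.volume_preserving_toLp (Fin (2 * d))).measurable.comp h1
  have : IsProbabilityMeasure (P.map (Xb k)) := Measure.isProbabilityMeasure_map hXmeas.aemeasurable
  -- normalise
  set r := ε / √(d : ℝ) with hr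
  have hrpos : 0 < r := by positivity
  have hεr : ε = √d * r := by rw [hr]; field_simp
  have hk' : (k : ℝ) < 1 / (8 * r) * Real.log (1 / r) := by
    have e1 : √(d : ℝ) / ε = 1 / r := by rw [hr]; field_simp
    have e2 : √(d : ℝ) / (8 * ε) = 1 / (8 * r) := by rw [hr]; field_simp
    rwa [e1, e2] at hkmix
  -- it suffices to bound each slow coordinate
  suffices H : ∃ D : ℝ, r ^ 2 < D ∧ ∀ i : Fin (2 * d), (i : ℕ) < d →
      ∀ γ : Measure (Euc (2 * d) × Euc (2 * d)), IsProbabilityMeasure γ →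
      MemLp (fun p : Euc (2 * d) × Euc (2 * d) => p.1 i) 2 γ →
      MemLp (fun p : Euc (2 * d) × Euc (2 * d) => p.2 i) 2 γ →
      γ.map Prod.fst = P.map (Xb k) → γ.map Prod.snd = μ →
      D ≤ ∫ p, (p.1 i - p.2 i) ^ 2 ∂γ by
    obtain ⟨D, hD, H⟩ := H
    have hW := aux_W2 (μ := P.map (Xb k)) (ν := μ)
      (fun i => (memLp_map_measure_iff (by fun_prop) hXmeas.aemeasurable).2 (hXmom i).1)
      (fun i => (hμmom i).1) (Finset.univ.filter fun i : Fin (2 * d) => (i : ℕ) < d) D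
      (fun i hi => H i (Finset.mem_filter.1 hi).2)
    refine lt_of_lt_of_le ?_ hW
    rw [aux_card, Real.sqrt_mul (Nat.cast_nonneg d), hεr]
    exact mul_lt_mul_of_pos_left (Real.lt_sqrt_of_sq_lt hD) hd
  -- transfer of moments to couplings
  have hfst : ∀ i (γ : Measure (Euc (2 * d) × Euc (2 * d))) (g : ℝ → ℝ), Measurable g →
      γ.map Prod.fst = P.map (Xb k) → ∫ p, g (p.1 i) ∂γ = ∫ ω, g (Xb k ω i) ∂P := by
    intro i γ g hg h1
    rw [← integral_map (φ := Prod.fst) (f := fun x : Euc (2 * d) => g (x i)) (by fun_prop)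
      (Measurable.aestronglyMeasurable (by fun_prop)), h1, integral_map hXmeas.aemeasurable
      (Measurable.aestronglyMeasurable (by fun_prop))]
  have hsnd : ∀ i (γ : Measure (Euc (2 * d) × Euc (2 * d))) (g : ℝ → ℝ), Measurable g →
      γ.map Prod.snd = μ → ∫ p, g (p.2 i) ∂γ = ∫ x, g (x i) ∂μ := by
    intro i γ g hg h1
    rw [← integral_map (φ := Prod.snd) (f := fun x : Euc (2 * d) => g (x i)) (by fun_prop)
      (Measurable.aestronglyMeasurable (by fun_prop)), h1]
  rcases lt_or_ge r ((1 - h) ^ k) with hcase | hcase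
  · refine ⟨((1 - h) ^ k) ^ 2, pow_lt_pow_left₀ hcase hrpos.le two_ne_zero, ?_⟩
    intro i hi γ hγ m1 m2 e1 e2
    have hai : (a i : ℝ) = 1 := by rw [ha, if_pos hi]
    have h1 := hfst i γ (fun x => x) measurable_id e1
    have h2 := hsnd i γ (fun x => x) measurable_id e2
    have h3 := (hXmom i).2.1
    rw [hai, mul_one] at h3
    have h4 := aux_mean m1 m2 (h2.trans (hμmom i).2.1)
    rwa [h1.trans h3] at h4
  · have hnum := aux_num hh0 hhalf hrpos k hk' hcase
    set q := 1 / (1 - h / 2) - ((1 - h) ^ k) ^ 2 * (1 / (1 - h / 2) - 1) with hq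
    have hsq : 1 + r < √q := Real.lt_sqrt_of_sq_lt hnum
    refine ⟨(√q - 1) ^ 2, pow_lt_pow_left₀ (by linarith) hrpos.le two_ne_zero, ?_⟩
    intro i hi γ hγ m1 m2 e1 e2
    have hai : (a i : ℝ) = 1 := by rw [ha, if_pos hi]
    have h1 := hfst i γ (fun x => x ^ 2) (by fun_prop) e1
    have h2 := hsnd i γ (fun x => x ^ 2) (by fun_prop) e2
    have h3 := (hXmom i).2.2.2 (1 / (1 - h / 2)) (by
      rw [hai, Real.sq_sqrt (by linarith)]
      have : 1 - h / 2 ≠ 0 := by linarith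
      have h1 : 1 / (1 - h / 2) * (1 - h / 2) = 1 := by rw [one_div, inv_mul_cancel₀ this]
      linear_combination 2 * h * h1)
    rw [hai, mul_one, ← hq] at h3
    have hq0 : 0 ≤ q := by nlinarith
    refine aux_second m1 m2 ?_ (by linarith) ?_
    · rw [h2, (hμmom i).2.2, NNReal.coe_inv, hai, inv_one]
    · rw [h1, h3, Real.sq_sqrt hq0]

end
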